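/- Let M be a totally even subset of ℙ³(𝔽₂) with exactly 8 elements. If there exists a plane P with |M ∩ P| = 6, then there exists g ∈ GL(4,𝔽₂) whose induced action on ℙ³(𝔽₂) maps M onto the type II set. -/

import Mathlib

/-- The projective space ℙ³(𝔽₂): points correspond to one-dimensional
linear subspaces of 𝔽₂⁴. -/
abbrev P3F2 := Projectivization (ZMod 2) (Fin 4 → ZMod 2)

/-- A plane in ℙ³(𝔽₂): the set of points whose corresponding one-dimensional
subspace is contained in a fixed three-dimensional linear subspace of 𝔽₂⁴. -/
def IsPlane (P : Set P3F2) : Prop :=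
  ∃ W : Submodule (ZMod 2) (Fin 4 → ZMod 2),
    Module.finrank (ZMod 2) W = 3 ∧ P = {x : P3F2 | x.submodule ≤ W}

/-- A line in ℙ³(𝔽₂): the set of points whose corresponding one-dimensional
subspace is contained in a fixed two-dimensional linear subspace of 𝔽₂⁴. -/
def IsLine (L : Set P3F2) : Prop :=
  ∃ W : Submodule (ZMod 2) (Fin 4 → ZMod 2),
    Module.finrank (ZMod 2) W = 2 ∧ L = {x : P3F2 | x.submodule ≤ W}

/-- A subset of ℙ³(𝔽₂) is totally even if it meets every plane in an even
number of points. -/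
def TotallyEven (M : Set P3F2) : Prop :=
  ∀ P : Set P3F2, IsPlane P → Even (M ∩ P).ncard

/-- The point of ℙ³(𝔽₂) with homogeneous coordinates `v`. -/
def pt (v : Fin 4 → ZMod 2) (hv : v ≠ 0) : P3F2 := Projectivization.mk (ZMod 2) v hv

/-- The type I (affine) set: points with homogeneous coordinates (a₁,a₂,a₃,a₄)
satisfying a₄ = 1. -/
def typeI : Set P3F2 :=
  {x : P3F2 | ∃ (v : Fin 4 → ZMod 2) (hv : v ≠ 0), v 3 = 1 ∧ x = Projectivization.mk (ZMod 2) v hv}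

/-- The type II set. -/
def typeII : Set P3F2 :=
  {pt ![1,0,0,0] (by decide), pt ![1,1,0,0] (by decide), pt ![0,1,0,0] (by decide),
   pt ![1,0,1,0] (by decide), pt ![0,0,1,0] (by decide), pt ![0,1,1,0] (by decide),
   pt ![1,1,1,1] (by decide), pt ![0,0,0,1] (by decide)}

/-- The action of an element of GL(4,𝔽₂) (a linear automorphism of 𝔽₂⁴)
on ℙ³(𝔽₂). -/
def projMap (g : (Fin 4 → ZMod 2) ≃ₗ[ZMod 2] (Fin 4 → ZMod 2)) : P3F2 → P3F2 :=
  Projectivization.map g.toLinearMap g.injective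

open Classical in
theorem rep_pt (v : Fin 4 → ZMod 2) (hv : v ≠ 0) :
    (Projectivization.mk (ZMod 2) v hv).rep = v := by
  obtain ⟨a, ha⟩ := Projectivization.exists_smul_eq_mk_rep (ZMod 2) v hv
  have h1 : a = 1 := Subsingleton.elim _ _
  rw [← ha, h1, one_smul]

theorem rep_inj : Function.Injective (fun x : P3F2 => x.rep) := by
  intro x y h
  have h' : x.rep = y.rep := h
  rw [← x.mk_rep, ← y.mk_rep]
  simp only [h']

theorem rep_projMap (g : (Fin 4 → ZMod 2) ≃ₗ[ZMod 2] (Fin 4 → ZMod 2)) (x : P3F2) :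
    (projMap g x).rep = g x.rep := by
  have h : projMap g x =
      Projectivization.mk (ZMod 2) (g x.rep) (by simpa using x.rep_nonzero) := by
    conv_lhs => rw [← x.mk_rep]
    rfl
  rw [h, rep_pt]

theorem sub_le_iff (x : P3F2) (W : Submodule (ZMod 2) (Fin 4 → ZMod 2)) :
    x.submodule ≤ W ↔ x.rep ∈ W := by
  rw [Projectivization.submodule_eq, Submodule.span_singleton_le_iff_mem]

/-- The concrete type II set as a finset of vectors. -/
def typeIIvec : Finset (Fin 4 → ZMod 2) :=
  {![1,0,0,0], ![1,1,0,0], ![0,1,0,0], ![1,0,1,0], ![0,0,1,0], ![0,1,1,0],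
   ![1,1,1,1], ![0,0,0,1]}

theorem rep_typeII : (fun x : P3F2 => x.rep) '' typeII = (typeIIvec : Set (Fin 4 → ZMod 2)) := by
  simp [typeII, typeIIvec, pt, Set.image_insert_eq, rep_pt]

theorem concrete (T : Finset (Fin 4 → ZMod 2)) (hc : T.card = 8)
    (hs : ∑ x ∈ T, x = 0)
    (hW : ∀ x, x 3 = 0 → (x ∈ T ↔ x ≠ 0 ∧ x ≠ ![1,1,1,0]))
    (ha : ![0,0,0,1] ∈ T) : T = typeIIvec := by
  let A : Finset (Fin 4 → ZMod 2) :=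
    {![1,0,0,0], ![1,1,0,0], ![0,1,0,0], ![1,0,1,0], ![0,0,1,0], ![0,1,1,0], ![0,0,0,1]}
  have hA : A ⊆ T := by
    intro x hx
    simp only [A, Finset.mem_insert, Finset.mem_singleton] at hx
    rcases hx with h | h | h | h | h | h | h <;> subst h
    iterate 6 exact (hW _ (by decide)).2 (by decide)
    exact ha
  have hAc : A.card = 7 := by decide
  have h1 : (T \ A).card = 1 := by rw [Finset.card_sdiff_of_subset hA, hc, hAc]
  obtain ⟨b, hb⟩ := Finset.card_eq_one.1 h1
  have h2 := Finset.sum_sdiff (f := fun x => x) hA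
  rw [hb, hs, Finset.sum_singleton] at h2
  have h3 : ∑ x ∈ A, x = ![1,1,1,1] := by decide
  rw [h3] at h2
  have h4 : b = ![1,1,1,1] := by
    revert h2
    clear * -
    revert b
    decide
  rw [← Finset.sdiff_union_of_subset hA, hb, h4]
  decide

theorem exists_g (W : Submodule (ZMod 2) (Fin 4 → ZMod 2)) (hW : Module.finrank (ZMod 2) W = 3)
    (p a : Fin 4 → ZMod 2) (hp : p ∈ W) (hp0 : p ≠ 0) (ha : a ∉ W) :
    ∃ g : (Fin 4 → ZMod 2) ≃ₗ[ZMod 2] (Fin 4 → ZMod 2),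
      g p = ![1,1,1,0] ∧ g a = ![0,0,0,1] ∧ ∀ x, x ∈ W ↔ g x 3 = 0 := by
  classical
  have hcW : (Finset.univ.filter (· ∈ W)).card = 8 := by
    have := Module.card_eq_pow_finrank (K := ZMod 2) (V := W)
    rw [hW, ZMod.card, Fintype.card_subtype] at this
    simpa using this
  obtain ⟨u, hu, hu'⟩ : ∃ u ∈ Finset.univ.filter (· ∈ W), u ∉ ({0, p} : Finset _) :=
    Finset.exists_mem_notMem_of_card_lt_card (lt_of_le_of_lt Finset.card_le_two (by omega))
  obtain ⟨v, hv, hv'⟩ : ∃ u' ∈ Finset.univ.filter (· ∈ W), u' ∉ ({0, p, u, u + p} : Finset _) :=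
    Finset.exists_mem_notMem_of_card_lt_card (lt_of_le_of_lt Finset.card_le_four (by omega))
  simp only [Finset.mem_filter, Finset.mem_univ, true_and, Finset.mem_insert,
    Finset.mem_singleton, not_or] at hu hu' hv hv'
  have h2 : (2 : Fin 4 → ZMod 2) = 0 := by decide
  have hz : ∀ c : ZMod 2, c = 0 ∨ c = 1 := by decide
  let b : Fin 4 → (Fin 4 → ZMod 2) := ![u, v, p + u + v, a]
  have hq : p + u + v ∈ W := W.add_mem (W.add_mem hp hu) hv
  have key : ∀ c : Fin 4 → ZMod 2, ∑ i, c i • b i ∈ W ↔ c 3 = 0 := by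
    intro c
    have h3 : c 0 • u + c 1 • v + c 2 • (p + u + v) ∈ W :=
      W.add_mem (W.add_mem (W.smul_mem _ hu) (W.smul_mem _ hv)) (W.smul_mem _ hq)
    simp only [Fin.sum_univ_four]
    change c 0 • u + c 1 • v + c 2 • (p + u + v) + c 3 • a ∈ W ↔ _
    rw [W.add_mem_iff_right h3]
    rcases hz (c 3) with h | h <;> simp [h, ha]
  have hli : LinearIndependent (ZMod 2) b := by
    rw [Fintype.linearIndependent_iff]
    intro c hc
    have h3 : c 3 = 0 := (key c).1 (by rw [hc]; exact W.zero_mem)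
    simp only [Fin.sum_univ_four] at hc
    change c 0 • u + c 1 • v + c 2 • (p + u + v) + c 3 • a = 0 at hc
    rw [h3, zero_smul, add_zero] at hc
    obtain ⟨hu0, hup⟩ := hu'
    obtain ⟨hv0, hvp, hvu, hvup⟩ := hv'
    have : c 0 = 0 ∧ c 1 = 0 ∧ c 2 = 0 := by
      rcases hz (c 0) with h | h <;> rcases hz (c 1) with h' | h' <;>
        rcases hz (c 2) with h'' | h'' <;> rw [h, h', h''] at hc ⊢ <;>
        simp only [zero_smul, one_smul, zero_add, add_zero] at hc <;>
        first
        | exact ⟨rfl, rfl, rfl⟩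
        | (exfalso; grind)
    intro i
    fin_cases i
    exacts [this.1, this.2.1, this.2.2, h3]
  let B := basisOfLinearIndependentOfCardEqFinrank hli (by simp)
  have hB : ∀ i, B i = b i := fun i => by simp [B]
  have hg : ∀ c : Fin 4 → ZMod 2, B.equivFun (∑ i, c i • b i) = c := by
    intro c
    have := B.equivFun.apply_symm_apply c
    rw [Module.Basis.equivFun_symm_apply] at this
    simpa only [hB] using this
  refine ⟨B.equivFun, ?_, ?_, ?_⟩
  · rw [← hg ![1,1,1,0]]
    congr 1
    simp [Fin.sum_univ_four, b]
    grind
  · rw [← hg ![0,0,0,1]]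
    congr 1
    simp [Fin.sum_univ_four, b]
  · intro x
    have := key (B.equivFun x)
    rw [← this]
    have h := B.sum_equivFun x
    simp only [hB] at h
    rw [h]

theorem coord_finrank (i : Fin 4) :
    Module.finrank (ZMod 2) (LinearMap.ker (LinearMap.proj i : (Fin 4 → ZMod 2) →ₗ[ZMod 2] ZMod 2)) = 3 := by
  have h := LinearMap.finrank_range_add_finrank_ker
    (LinearMap.proj i : (Fin 4 → ZMod 2) →ₗ[ZMod 2] ZMod 2)
  rw [LinearMap.range_eq_top.2 (LinearMap.proj_surjective i)] at h
  simp at h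
  omega

/-- A totally even 8-point subset of ℙ³(𝔽₂) admitting a plane meeting it in
6 points is mapped onto the type II set by some element of GL(4,𝔽₂). -/
theorem totallyEven_with_six_plane_is_typeII (M : Set P3F2)
    (hM : M.ncard = 8) (hTE : TotallyEven M)
    (hP : ∃ P : Set P3F2, IsPlane P ∧ (M ∩ P).ncard = 6) :
    ∃ g : (Fin 4 → ZMod 2) ≃ₗ[ZMod 2] (Fin 4 → ZMod 2),
      projMap g '' M = typeII := by
  classical
  obtain ⟨P, ⟨W, hW, rfl⟩, h6⟩ := hP
  let S : Finset (Fin 4 → ZMod 2) := ((fun x : P3F2 => x.rep) '' M).toFinset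
  have hSM : (S : Set (Fin 4 → ZMod 2)) = (fun x : P3F2 => x.rep) '' M := by simp [S]
  have hS0 : ∀ v ∈ S, v ≠ 0 := by
    intro v hv
    rw [← Finset.mem_coe, hSM] at hv
    obtain ⟨x, -, rfl⟩ := hv
    exact x.rep_nonzero
  have hS8 : S.card = 8 := by
    rw [← Set.ncard_coe_finset, hSM, Set.ncard_image_of_injective _ rep_inj, hM]
  have hcount : ∀ U : Submodule (ZMod 2) (Fin 4 → ZMod 2),
      (M ∩ {x : P3F2 | x.submodule ≤ U}).ncard = (S.filter (· ∈ U)).card := by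
    intro U
    rw [← Set.ncard_coe_finset, ← Set.ncard_image_of_injective _ rep_inj]
    congr 1
    ext v
    rw [Finset.mem_coe, Finset.mem_filter, ← Finset.mem_coe, hSM]
    constructor
    · rintro ⟨x, ⟨hx, hx'⟩, rfl⟩
      exact ⟨⟨x, hx, rfl⟩, (sub_le_iff x U).1 hx'⟩
    · rintro ⟨⟨x, hx, rfl⟩, hx'⟩
      exact ⟨x, ⟨hx, (sub_le_iff x U).2 hx'⟩, rfl⟩
  have hsum : ∑ x ∈ S, x = 0 := by
    funext i
    have he := hTE _ ⟨_, coord_finrank i, rfl⟩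
    rw [hcount] at he
    simp only [LinearMap.mem_ker, LinearMap.proj_apply] at he
    have ht := Finset.card_filter_add_card_filter_not (s := S) (fun x => x i = 0)
    rw [hS8] at ht
    have he2 : Even (S.filter (fun x => ¬ x i = 0)).card := by
      rcases he with ⟨k, hk⟩
      exact ⟨4 - k, by omega⟩
    rw [Finset.sum_apply, ← Finset.sum_filter_ne_zero,
      Finset.sum_congr rfl (g := fun _ => (1 : ZMod 2)), Finset.sum_const, nsmul_one]
    · exact (ZMod.natCast_eq_zero_iff_even).2 he2
    · intro x hx
      have := (Finset.mem_filter.1 hx).2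
      have hz : ∀ c : ZMod 2, c ≠ 0 → c = 1 := by decide
      exact hz _ this
  rw [hcount] at h6
  have hcW : (Finset.univ.filter (· ∈ W)).card = 8 := by
    have := Module.card_eq_pow_finrank (K := ZMod 2) (V := W)
    rw [hW, ZMod.card, Fintype.card_subtype] at this
    simpa using this
  have hsub : S.filter (· ∈ W) ⊆ (Finset.univ.filter (· ∈ W)).erase 0 := by
    intro x hx
    rw [Finset.mem_filter] at hx
    simp [hx.2, hS0 x hx.1]
  have hd : ((Finset.univ.filter (· ∈ W)).erase 0 \ S.filter (· ∈ W)).card = 1 := by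
    rw [Finset.card_sdiff_of_subset hsub, Finset.card_erase_of_mem (by simp), hcW, h6]
  obtain ⟨p, hp⟩ := Finset.card_eq_one.1 hd
  have hpp : ∀ x, (x ≠ 0 ∧ x ∈ W ∧ x ∉ S) ↔ x = p := by
    intro x
    have := Finset.ext_iff.1 hp x
    simp only [Finset.mem_sdiff, Finset.mem_erase, Finset.mem_filter, Finset.mem_univ,
      Finset.mem_singleton, true_and] at this
    tauto
  obtain ⟨hp0, hpW, hpS⟩ := (hpp p).2 rfl
  obtain ⟨a, haS, haW⟩ : ∃ a ∈ S, a ∉ S.filter (· ∈ W) :=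
    Finset.exists_mem_notMem_of_card_lt_card (by omega)
  have haW' : a ∉ W := fun h => haW (Finset.mem_filter.2 ⟨haS, h⟩)
  obtain ⟨g, hgp, hga, hgW⟩ := exists_g W hW p a hpW hp0 haW'
  refine ⟨g, ?_⟩
  have hT : S.image g = typeIIvec := by
    apply concrete
    · rw [Finset.card_image_of_injective _ g.injective, hS8]
    · rw [Finset.sum_image (fun x _ y _ h => g.injective h), ← map_sum, hsum, map_zero]
    · intro x hx
      obtain ⟨y, rfl⟩ := g.surjective x
      have hyW := (hgW y).2 hx
      rw [← hgp, g.injective.ne_iff, Finset.mem_image]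
      have h1 : (∃ z ∈ S, g z = g y) ↔ y ∈ S :=
        ⟨fun ⟨z, hz, h⟩ => g.injective h ▸ hz, fun h => ⟨y, h, rfl⟩⟩
      rw [h1, ne_eq (g y), g.map_eq_zero_iff]
      have := hpp y
      have := hS0 y
      have : y = p → y ∉ S := fun h => h ▸ hpS
      tauto
    · rw [← hga]
      exact Finset.mem_image_of_mem _ haS
  apply rep_inj.image_injective
  change (fun x : P3F2 => x.rep) '' _ = (fun x : P3F2 => x.rep) '' _
  rw [rep_typeII, ← hT, Finset.coe_image, hSM, Set.image_image, Set.image_image]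
  simp only [rep_projMap]
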